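/- arXiv:2305.05275 — 4 statements merged into one kernel-verified Lean document; each statement's English description precedes it below -/
import Mathlib

section
/- Let P be a polytope fulfilling the rhombus criterion and let F be a face of P. Then for any vertices α, β of F that have witnesses α', β' of the rhombus criterion in P, the witnesses α' and β' belong to F; consequently F fulfills the rhombus criterion. -/
/-- A pair of vertices (extreme points) `α, β` of `P` fulfills the rhombus criterion if
`conv(α,β)` is an edge (a face) of `P` or there are witnesses `α', β'` with
`α + β = α' + β'`.  `P` fulfills the rhombus criterion if every pair of its vertices does. -/
def FulfillsRhombus {E : Type*} [NormedAddCommGroup E] [NormedSpace ℝ E] (P : Set E) : Prop :=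
  ∀ α ∈ Set.extremePoints ℝ P, ∀ β ∈ Set.extremePoints ℝ P, α ≠ β →
    IsExposed ℝ P (segment ℝ α β) ∨
      ∃ α' ∈ Set.extremePoints ℝ P, ∃ β' ∈ Set.extremePoints ℝ P,
        α' ≠ α ∧ α' ≠ β ∧ β' ≠ α ∧ β' ≠ β ∧ α + β = α' + β'

/-! Suppose a linear functional attains its maximum `m` over `P` exactly on the face `F`. If
`α + β = α' + β'` with `α, β ∈ F` and `α', β' ∈ P`, then its values at `α'` and `β'` are at most `m`
and sum to `2 * m`, so both equal `m`. Every point of the segment from `α` to `β` is such an `α'`: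
take for `β'` its reflection through the midpoint. Hence `F` contains that segment whenever `P`
does, and edges of `P` joining vertices of `F` are edges of `F`. -/

section Exposed

variable {𝕜 E : Type*} [Semiring 𝕜] [PartialOrder 𝕜] [AddCommMonoid E] [Module 𝕜 E] {a b x y : E}

theorem exists_mem_segment_add_eq_add (hx : x ∈ segment 𝕜 a b) :
    ∃ y ∈ segment 𝕜 a b, a + b = x + y := by
  obtain ⟨s, t, hs, ht, hst, rfl⟩ := hx
  have hts : t + s = 1 := by rwa [add_comm]
  refine ⟨t • a + s • b, ⟨t, s, ht, hs, hts, rfl⟩, ?_⟩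
  rw [add_add_add_comm, ← add_smul, ← add_smul, hst, hts, one_smul, one_smul]

variable [TopologicalSpace 𝕜] [IsOrderedCancelAddMonoid 𝕜] [TopologicalSpace E] {P F : Set E}

theorem mem_and_mem_of_isExposed_of_add_eq_add (hF : IsExposed 𝕜 P F) (ha : a ∈ F) (hb : b ∈ F)
    (hx : x ∈ P) (hy : y ∈ P) (h : a + b = x + y) : x ∈ F ∧ y ∈ F := by
  obtain ⟨l, rfl⟩ := hF ⟨a, ha⟩
  have l_add : l a + l b = l x + l y := by rw [← map_add, h, map_add]
  have le_l_x : l a ≤ l x :=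
    le_of_add_le_add_right ((add_le_add le_rfl (hb.2 y hy)).trans_eq l_add)
  have le_l_y : l b ≤ l y :=
    le_of_add_le_add_left ((add_le_add (ha.2 x hx) le_rfl).trans_eq l_add)
  exact ⟨⟨hx, fun z hz => (ha.2 z hz).trans le_l_x⟩, ⟨hy, fun z hz => (hb.2 z hz).trans le_l_y⟩⟩

theorem segment_subset_of_isExposed (hF : IsExposed 𝕜 P F) (ha : a ∈ F) (hb : b ∈ F)
    (hP : segment 𝕜 a b ⊆ P) : segment 𝕜 a b ⊆ F := by
  intro x hx
  obtain ⟨y, hy, h⟩ := exists_mem_segment_add_eq_add hx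
  exact (mem_and_mem_of_isExposed_of_add_eq_add hF ha hb (hP hx) (hP hy) h).1

end Exposed

theorem FulfillsRhombus.of_isExposed {E : Type*} [NormedAddCommGroup E] [NormedSpace ℝ E]
    {P F : Set E} (hP : FulfillsRhombus P) (hF : IsExposed ℝ P F) : FulfillsRhombus F := by
  intro α hα β hβ hne
  rw [hF.isExtreme.extremePoints_eq] at hα hβ ⊢
  rcases hP α hα.2 β hβ.2 hne with hedge | ⟨α', hα', β', hβ', hα'α, hα'β, hβ'α, hβ'β, h⟩
  · exact .inl (hedge.mono hF.subset (segment_subset_of_isExposed hF hα.1 hβ.1 hedge.subset))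
  · obtain ⟨hα'F, hβ'F⟩ := mem_and_mem_of_isExposed_of_add_eq_add hF hα.1 hβ.1 hα'.1 hβ'.1 h
    exact .inr ⟨α', ⟨hα'F, hα'⟩, β', ⟨hβ'F, hβ'⟩, hα'α, hα'β, hβ'α, hβ'β, h⟩

theorem stmt_3_general {E : Type*} [NormedAddCommGroup E] [NormedSpace ℝ E] {P F : Set E}
    (hRh : FulfillsRhombus P) (hF : IsExposed ℝ P F) :
    (∀ α ∈ F, ∀ β ∈ F, ∀ α' ∈ P, ∀ β' ∈ P, α + β = α' + β' → α' ∈ F ∧ β' ∈ F) ∧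
      FulfillsRhombus F :=
  ⟨fun _ hα _ hβ _ hα' _ hβ' h => mem_and_mem_of_isExposed_of_add_eq_add hF hα hβ hα' hβ' h,
    hRh.of_isExposed hF⟩

theorem stmt_3 {d : ℕ} (P F : Set (EuclideanSpace ℝ (Fin d)))
    (hP : ∃ S : Finset (EuclideanSpace ℝ (Fin d)), P = convexHull ℝ ↑S)
    (hRh : FulfillsRhombus P) (hF : IsExposed ℝ P F) :
    (∀ α ∈ Set.extremePoints ℝ F, ∀ β ∈ Set.extremePoints ℝ F,
      ∀ α' ∈ Set.extremePoints ℝ P, ∀ β' ∈ Set.extremePoints ℝ P,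
        α' ≠ α → α' ≠ β → β' ≠ α → β' ≠ β → α + β = α' + β' →
          α' ∈ F ∧ β' ∈ F) ∧
    FulfillsRhombus F :=
  (stmt_3_general hRh hF).imp_left fun hmem α hα β hβ α' hα' β' hβ' _ _ _ _ =>
    hmem α hα.1 β hβ.1 α' hα'.1 β' hβ'.1
end

section
/- If a polytope P fulfills the rhombus criterion, then every 2-dimensional face F of P is either a triangle (F has exactly 3 vertices), or F has exactly 4 vertices which can be labeled α, β, α', β' so that α + β = α' + β' (a rhombus, i.e., a parallelogram). -/
/-!
A linear map that is injective on the span of the face carries it to a compact convex set `K` in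
the plane, which inherits the rhombus criterion. Take a triangle `a b c` of largest area with
corners among the vertices of `K`. If a vertex `x` lies beyond the side `b c`, maximality forces the
segment from `a` to `x` to cross that side, so `b c` is not an edge and `b + c = p + q` for other
vertices `p` and `q`. One of them is on the same side of the line `b c` as `a`, and by
maximality it lies in the triangle `a b c`; hence it is `a`, and the other one is `b + c - a`. Since
the triangles cut from the parallelogram `a b (b + c - a) c` by its diagonals are again largest,
every vertex of `K` lies in the parallelogram.
-/

open Set

section ExtremeRhombus

variable {E : Type*} [AddCommGroup E] [Module ℝ E]

/-- The rhombus criterion with edges read as extreme, rather than exposed, segments. In this form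
it needs no topology and passes to extreme subsets and to injective linear images. -/
def ExtremeRhombus (F : Set E) : Prop :=
  ∀ α ∈ F.extremePoints ℝ, ∀ β ∈ F.extremePoints ℝ, α ≠ β →
    IsExtreme ℝ F (segment ℝ α β) ∨
      ∃ α' ∈ F.extremePoints ℝ, ∃ β' ∈ F.extremePoints ℝ,
        α' ≠ α ∧ α' ≠ β ∧ β' ≠ α ∧ β' ≠ β ∧ α + β = α' + β'

/-- `V` consists of the four corners of a parallelogram, `α`, `β` and `α'`, `β'` being the pairs of
opposite corners. -/
def IsParallelogram (V : Set E) : Prop :=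
  ∃ α β α' β' : E, V = {α, β, α', β'} ∧
    α ≠ β ∧ α ≠ α' ∧ α ≠ β' ∧ β ≠ α' ∧ β ≠ β' ∧ α' ≠ β' ∧ α + β = α' + β'

theorem mem_of_mem_extremePoints_of_mem_convexHull {K s : Set E} {x : E} (hK : Convex ℝ K)
    (hs : s ⊆ K) (hx : x ∈ K.extremePoints ℝ) (hxs : x ∈ convexHull ℝ s) : x ∈ s :=
  extremePoints_convexHull_subset
    (inter_extremePoints_subset_extremePoints_of_subset (convexHull_min hs hK) ⟨hxs, hx⟩)

theorem ExtremeRhombus.of_isExtreme {P F : Set E} (hP : ExtremeRhombus P) (hF : IsExtreme ℝ P F)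
    (hconv : Convex ℝ F) : ExtremeRhombus F := by
  have hsub := hF.extremePoints_subset_extremePoints
  intro α hα β hβ hne
  rcases hP α (hsub hα) β (hsub hβ) hne with
    hE | ⟨α', hα', β', hβ', h₁, h₂, h₃, h₄, hsum⟩
  · exact .inl (hE.mono hF.subset (hconv.segment_subset hα.1 hβ.1))
  · have hmid : midpoint ℝ α β ∈ F := hconv.midpoint_mem hα.1 hβ.1
    have hopen : midpoint ℝ α β ∈ openSegment ℝ α' β' := by
      rw [midpoint_eq_smul_add, hsum, ← midpoint_eq_smul_add]
      exact midpoint_mem_openSegment α' β'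
    rw [hF.extremePoints_eq]
    exact .inr ⟨α', ⟨hF.left_mem_of_mem_openSegment hα'.1 hβ'.1 hmid hopen, hα'⟩,
      β', ⟨hF.right_mem_of_mem_openSegment hα'.1 hβ'.1 hmid hopen, hβ'⟩, h₁, h₂, h₃, h₄, hsum⟩

section Image

variable {G : Type*} [AddCommGroup G] [Module ℝ G]

theorem isExtreme_image_of_injOn {F S : Set E} (hF : Convex ℝ F) (hS : IsExtreme ℝ F S)
    (φ : E →ₗ[ℝ] G) (hφ : InjOn φ F) : IsExtreme ℝ (φ '' F) (φ '' S) := by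
  refine ⟨image_mono hS.subset, ?_⟩
  rintro _ ⟨x, hx, rfl⟩ _ ⟨y, hy, rfl⟩ _ ⟨z, hz, rfl⟩ hopen
  obtain ⟨z', hz', hzz'⟩ := (image_openSegment ℝ φ.toAffineMap x y).ge hopen
  obtain rfl : z' = z := hφ (hF.openSegment_subset hx hy hz') (hS.subset hz) hzz'
  exact mem_image_of_mem φ (hS.left_mem_of_mem_openSegment hx hy hz hz')

theorem image_extremePoints_of_injOn {F : Set E} (hF : Convex ℝ F) (φ : E →ₗ[ℝ] G)
    (hφ : InjOn φ F) : φ '' F.extremePoints ℝ = (φ '' F).extremePoints ℝ := by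
  refine Subset.antisymm ?_ ?_
  · rintro _ ⟨x, hx, rfl⟩
    simpa using isExtreme_image_of_injOn hF (isExtreme_singleton.2 hx) φ hφ
  · rintro _ ⟨⟨x, hx, rfl⟩, hext⟩
    refine mem_image_of_mem φ ⟨hx, fun x₁ hx₁ x₂ hx₂ hopen => hφ hx₁ hx ?_⟩
    exact hext (mem_image_of_mem φ hx₁) (mem_image_of_mem φ hx₂)
      ((image_openSegment ℝ φ.toAffineMap x₁ x₂).le (mem_image_of_mem φ hopen))

theorem ExtremeRhombus.image {F : Set E} (hR : ExtremeRhombus F) (hF : Convex ℝ F)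
    (φ : E →ₗ[ℝ] G) (hφ : InjOn φ F) : ExtremeRhombus (φ '' F) := by
  unfold ExtremeRhombus
  rw [← image_extremePoints_of_injOn hF φ hφ]
  rintro _ ⟨α, hα, rfl⟩ _ ⟨β, hβ, rfl⟩ hne
  rcases hR α hα β hβ (ne_of_apply_ne φ hne) with
    hE | ⟨α', hα', β', hβ', h₁, h₂, h₃, h₄, hsum⟩
  · left
    have himage : φ '' segment ℝ α β = segment ℝ (φ α) (φ β) :=
      image_segment ℝ φ.toAffineMap α β
    exact himage ▸ isExtreme_image_of_injOn hF hE φ hφ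
  · refine .inr ⟨φ α', mem_image_of_mem φ hα', φ β', mem_image_of_mem φ hβ',
      hφ.ne hα'.1 hα.1 h₁, hφ.ne hα'.1 hβ.1 h₂, hφ.ne hβ'.1 hα.1 h₃, hφ.ne hβ'.1 hβ.1 h₄, ?_⟩
    rw [← map_add, hsum, map_add]

theorem injOn_of_injOn_vectorSpan {V : Set E} {φ : E →ₗ[ℝ] G} (hφ : InjOn φ (vectorSpan ℝ V)) :
    InjOn φ V := by
  intro p hp q hq hpq
  have hmem : p - q ∈ vectorSpan ℝ V := vsub_mem_vectorSpan ℝ hp hq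
  exact sub_eq_zero.1 (hφ hmem (zero_mem _) (by rw [map_sub, hpq, sub_self, map_zero]))

theorem IsParallelogram.of_image {V : Set E} {φ : E →ₗ[ℝ] G} (hφ : InjOn φ (vectorSpan ℝ V))
    (hV : IsParallelogram (φ '' V)) : IsParallelogram V := by
  obtain ⟨α, β, α', β', heq, h₁, h₂, h₃, h₄, h₅, h₆, hsum⟩ := hV
  obtain ⟨⟨α, hα, rfl⟩, ⟨β, hβ, rfl⟩, ⟨α', hα', rfl⟩, ⟨β', hβ', rfl⟩⟩ :
      α ∈ φ '' V ∧ β ∈ φ '' V ∧ α' ∈ φ '' V ∧ β' ∈ φ '' V := by simp [heq]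
  refine ⟨α, β, α', β', ?_, ne_of_apply_ne φ h₁, ne_of_apply_ne φ h₂, ne_of_apply_ne φ h₃,
    ne_of_apply_ne φ h₄, ne_of_apply_ne φ h₅, ne_of_apply_ne φ h₆, ?_⟩
  · refine ((injOn_of_injOn_vectorSpan hφ).image_eq_image_iff Subset.rfl ?_).1 ?_
    · simp [insert_subset_iff, hα, hβ, hα', hβ']
    · simp only [heq, image_insert_eq, image_singleton]
  · have hmem : (α - α') + (β - β') ∈ vectorSpan ℝ V :=
      add_mem (vsub_mem_vectorSpan ℝ hα hα') (vsub_mem_vectorSpan ℝ hβ hβ')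
    have hzero : φ ((α - α') + (β - β')) = φ 0 := by
      rw [sub_add_sub_comm, map_sub, map_add, map_add, hsum, sub_self, map_zero]
    rw [← sub_eq_zero, ← sub_add_sub_comm]
    exact hφ hmem (zero_mem _) hzero

end Image

end ExtremeRhombus

theorem exists_mem_extremePoints_forall_le {E : Type*} [AddCommGroup E] [Module ℝ E]
    [TopologicalSpace E] [T2Space E] [IsTopologicalAddGroup E] [ContinuousSMul ℝ E]
    [LocallyConvexSpace ℝ E] {K : Set E} (hK : IsCompact K) (hne : K.Nonempty)
    (l : StrongDual ℝ E) : ∃ x ∈ K.extremePoints ℝ, ∀ y ∈ K, l y ≤ l x := by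
  have hexp : IsExposed ℝ K (l.toExposed K) := ContinuousLinearMap.toExposed.isExposed
  obtain ⟨z, hz, hmax⟩ := hK.exists_isMaxOn hne l.continuous.continuousOn
  obtain ⟨x, hx⟩ := (hexp.isCompact hK).extremePoints_nonempty ⟨z, hz, hmax⟩
  exact ⟨x, hexp.isExtreme.extremePoints_subset_extremePoints hx, hx.1.2⟩

section Plane

/-- Twice the signed area of the triangle with corners `p`, `q`, `r`. -/
def doubleArea (p q r : ℝ × ℝ) : ℝ :=
  (q.1 - p.1) * (r.2 - p.2) - (r.1 - p.1) * (q.2 - p.2)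

variable {a b c x : ℝ × ℝ}

theorem doubleArea_rotate (p q r : ℝ × ℝ) : doubleArea q r p = doubleArea p q r := by
  simp only [doubleArea]
  ring

theorem doubleArea_swap (p q r : ℝ × ℝ) : doubleArea p r q = -doubleArea p q r := by
  simp only [doubleArea]
  ring

theorem doubleArea_add_add (a b c x : ℝ × ℝ) :
    doubleArea x b c + doubleArea a x c + doubleArea a b x = doubleArea a b c := by
  simp only [doubleArea]
  ring

theorem doubleArea_smul_add_add (a b c x : ℝ × ℝ) :
    doubleArea x b c • a + doubleArea a x c • b + doubleArea a b x • c =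
      doubleArea a b c • x := by
  ext <;> simp only [doubleArea, Prod.fst_add, Prod.snd_add, Prod.smul_fst, Prod.smul_snd,
    smul_eq_mul] <;> ring

theorem doubleArea_eq_zero_of_mem_segment (ha : a ∈ segment ℝ b c) : doubleArea a b c = 0 := by
  obtain ⟨s, t, -, -, hst, rfl⟩ := ha
  obtain rfl : s = 1 - t := by linarith
  simp only [doubleArea, Prod.fst_add, Prod.snd_add, Prod.smul_fst, Prod.smul_snd, smul_eq_mul]
  ring

theorem mem_convexHull_of_doubleArea_nonneg (hpos : 0 < doubleArea a b c)
    (ha : 0 ≤ doubleArea x b c) (hb : 0 ≤ doubleArea a x c) (hc : 0 ≤ doubleArea a b x) :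
    x ∈ convexHull ℝ {a, b, c} := by
  have hx : x = (doubleArea a b c)⁻¹ •
      (doubleArea x b c • a + doubleArea a x c • b + doubleArea a b x • c) := by
    rw [doubleArea_smul_add_add, inv_smul_smul₀ hpos.ne']
  have hcomb := (convex_convexHull ℝ {a, b, c}).centerMass_mem (t := Finset.univ)
    (w := ![doubleArea x b c, doubleArea a x c, doubleArea a b x]) (z := ![a, b, c])
    (by simp [Fin.forall_fin_succ, ha, hb, hc])
    (by simpa [Fin.sum_univ_three, doubleArea_add_add] using hpos)
    (by intro i _; fin_cases i <;> exact subset_convexHull ℝ _ (by simp))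
  simpa [Finset.centerMass, Fin.sum_univ_three, doubleArea_add_add, ← hx] using hcomb

theorem not_isExtreme_segment_of_doubleArea_neg {K : Set (ℝ × ℝ)} (haK : a ∈ K) (hxK : x ∈ K)
    (hpos : 0 < doubleArea a b c) (hx : doubleArea x b c < 0)
    (hb : 0 ≤ doubleArea a x c) (hc : 0 ≤ doubleArea a b x) :
    ¬ IsExtreme ℝ K (segment ℝ b c) := by
  -- The segments from `a` to `x` and from `b` to `c` cross, so `a` would lie on the latter.
  intro hE
  have hsum := doubleArea_add_add a b c x
  have hs : 0 < doubleArea a x c + doubleArea a b x := by linarith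
  set s := doubleArea a x c + doubleArea a b x with hs_def
  have hseg : s⁻¹ • (doubleArea a x c • b + doubleArea a b x • c) ∈ segment ℝ b c :=
    ⟨s⁻¹ * doubleArea a x c, s⁻¹ * doubleArea a b x, by positivity, by positivity,
      by rw [← mul_add, ← hs_def, inv_mul_cancel₀ hs.ne'], by module⟩
  have hopen : s⁻¹ • (doubleArea a x c • b + doubleArea a b x • c) ∈ openSegment ℝ a x := by
    refine ⟨s⁻¹ * -doubleArea x b c, s⁻¹ * doubleArea a b c,
      mul_pos (inv_pos.2 hs) (neg_pos.2 hx), by positivity, ?_, ?_⟩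
    · rw [← mul_add, inv_mul_eq_one₀ hs.ne']
      linarith
    · rw [mul_smul, mul_smul, ← doubleArea_smul_add_add]
      module
  exact hpos.ne' (doubleArea_eq_zero_of_mem_segment
    (hE.left_mem_of_mem_openSegment haK hxK hseg hopen))

theorem collinear_of_doubleArea_eq_zero {K : Set (ℝ × ℝ)}
    (h : ∀ p ∈ K, ∀ q ∈ K, ∀ r ∈ K, doubleArea p q r = 0) : Collinear ℝ K := by
  rcases K.subsingleton_or_nontrivial with hK | ⟨p, hp, q, hq, hpq⟩
  · exact hK.induction_on (collinear_empty ℝ _) (collinear_singleton ℝ)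
  refine (collinear_iff_of_mem hp).2 ⟨q - p, fun r hr => ?_⟩
  have harea := h p hp q hq r hr
  set d := (q.1 - p.1) ^ 2 + (q.2 - p.2) ^ 2 with hd
  have hd0 : d ≠ 0 := by
    intro h0
    have h₁ : q.1 - p.1 = 0 := by nlinarith [sq_nonneg (q.1 - p.1), sq_nonneg (q.2 - p.2)]
    have h₂ : q.2 - p.2 = 0 := by nlinarith [sq_nonneg (q.1 - p.1), sq_nonneg (q.2 - p.2)]
    exact hpq (Prod.ext (by linarith) (by linarith))
  refine ⟨((q.1 - p.1) * (r.1 - p.1) + (q.2 - p.2) * (r.2 - p.2)) / d, ?_⟩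
  unfold doubleArea at harea
  ext
  · simp only [vadd_eq_add, Prod.fst_add, Prod.smul_fst, Prod.fst_sub, smul_eq_mul]
    field_simp
    rw [hd]
    linear_combination (p.2 - q.2) * harea
  · simp only [vadd_eq_add, Prod.snd_add, Prod.smul_snd, Prod.snd_sub, smul_eq_mul]
    field_simp
    rw [hd]
    linear_combination (q.1 - p.1) * harea

theorem exists_mem_extremePoints_doubleArea_le {K : Set (ℝ × ℝ)} (hK : IsCompact K)
    {p : ℝ × ℝ} (hp : p ∈ K) (q r : ℝ × ℝ) :
    ∃ p' ∈ K.extremePoints ℝ, doubleArea p q r ≤ doubleArea p' q r := by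
  let l : StrongDual ℝ (ℝ × ℝ) := (q.2 - r.2) • .fst ℝ ℝ ℝ + (r.1 - q.1) • .snd ℝ ℝ ℝ
  have hl (y : ℝ × ℝ) : doubleArea y q r = l y + (q.1 * r.2 - r.1 * q.2) := by
    simp only [l, doubleArea, add_apply, smul_apply,
      ContinuousLinearMap.coe_fst', ContinuousLinearMap.coe_snd', smul_eq_mul]
    ring
  obtain ⟨p', hp', hmax⟩ := exists_mem_extremePoints_forall_le hK ⟨p, hp⟩ l
  exact ⟨p', hp', by simpa only [hl, add_le_add_iff_right] using hmax p hp⟩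

/-- `a b c` is a positively oriented triangle of largest area among those with corners in `V`. -/
structure IsLargestTriangle (V : Set (ℝ × ℝ)) (a b c : ℝ × ℝ) : Prop where
  fst_mem : a ∈ V
  snd_mem : b ∈ V
  thd_mem : c ∈ V
  pos : 0 < doubleArea a b c
  le : ∀ p ∈ V, ∀ q ∈ V, ∀ r ∈ V, doubleArea p q r ≤ doubleArea a b c

theorem exists_isLargestTriangle_extremePoints {K : Set (ℝ × ℝ)} (hK : IsCompact K)
    (hcol : ¬ Collinear ℝ K) : ∃ a b c, IsLargestTriangle (K.extremePoints ℝ) a b c := by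
  have hne : K.Nonempty := by
    rw [nonempty_iff_ne_empty]
    rintro rfl
    exact hcol (collinear_empty ℝ _)
  have hcont : Continuous fun t : (ℝ × ℝ) × (ℝ × ℝ) × (ℝ × ℝ) =>
      doubleArea t.1 t.2.1 t.2.2 := by
    unfold doubleArea
    fun_prop
  obtain ⟨⟨p, q, r⟩, ⟨hp, hq, hr⟩, hmax⟩ :=
    (hK.prod (hK.prod hK)).exists_isMaxOn (hne.prod (hne.prod hne)) hcont.continuousOn
  obtain ⟨a, ha, hpa⟩ := exists_mem_extremePoints_doubleArea_le hK hp q r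
  obtain ⟨b, hb, hqb⟩ := exists_mem_extremePoints_doubleArea_le hK hq r a
  obtain ⟨c, hc, hrc⟩ := exists_mem_extremePoints_doubleArea_le hK hr a b
  rw [doubleArea_rotate a q r, doubleArea_rotate a b r] at hqb
  rw [← doubleArea_rotate r a b, ← doubleArea_rotate c a b] at hrc
  have hle : ∀ p' ∈ K, ∀ q' ∈ K, ∀ r' ∈ K, doubleArea p' q' r' ≤ doubleArea a b c :=
    fun p' hp' q' hq' r' hr' =>
      (hmax (mk_mem_prod hp' (mk_mem_prod hq' hr'))).trans (hpa.trans (hqb.trans hrc))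
  refine ⟨a, b, c, ha, hb, hc, ?_, fun p hp q hq r hr => hle p hp.1 q hq.1 r hr.1⟩
  by_contra! hnonpos
  refine hcol (collinear_of_doubleArea_eq_zero fun p hp q hq r hr => ?_)
  have hswap := hle p hp r hr q hq
  rw [doubleArea_swap] at hswap
  linarith [hle p hp q hq r hr]

namespace IsLargestTriangle

variable {V K : Set (ℝ × ℝ)}

theorem rotate (hT : IsLargestTriangle V a b c) : IsLargestTriangle V b c a where
  fst_mem := hT.snd_mem
  snd_mem := hT.thd_mem
  thd_mem := hT.fst_mem
  pos := doubleArea_rotate a b c ▸ hT.pos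
  le := doubleArea_rotate a b c ▸ hT.le

theorem reflect (hT : IsLargestTriangle V a b c) (hd : b + c - a ∈ V) :
    IsLargestTriangle V (b + c - a) c b := by
  have harea : doubleArea (b + c - a) c b = doubleArea a b c := by
    simp only [doubleArea, Prod.fst_sub, Prod.snd_sub, Prod.fst_add, Prod.snd_add]
    ring
  exact ⟨hd, hT.thd_mem, hT.snd_mem, harea ▸ hT.pos, harea ▸ hT.le⟩

theorem fst_ne_snd (hT : IsLargestTriangle V a b c) : a ≠ b := by
  rintro rfl
  simpa [doubleArea] using hT.pos

theorem subset (hT : IsLargestTriangle V a b c) : {a, b, c} ⊆ V := by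
  simp [insert_subset_iff, hT.fst_mem, hT.snd_mem, hT.thd_mem]

theorem mem_of_doubleArea_nonneg (hT : IsLargestTriangle (K.extremePoints ℝ) a b c)
    (hK : Convex ℝ K) (hx : x ∈ K.extremePoints ℝ) (ha : 0 ≤ doubleArea x b c)
    (hb : 0 ≤ doubleArea a x c) (hc : 0 ≤ doubleArea a b x) : x ∈ ({a, b, c} : Set (ℝ × ℝ)) :=
  mem_of_mem_extremePoints_of_mem_convexHull hK (hT.subset.trans extremePoints_subset) hx
    (mem_convexHull_of_doubleArea_nonneg hT.pos ha hb hc)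

theorem eq_fst_of_add_eq_add (hT : IsLargestTriangle (K.extremePoints ℝ) a b c)
    (hK : Convex ℝ K) {p q : ℝ × ℝ} (hp : p ∈ K.extremePoints ℝ) (hq : q ∈ K.extremePoints ℝ)
    (hpb : p ≠ b) (hpc : p ≠ c) (hsum : b + c = p + q) (hside : 0 ≤ doubleArea p b c) :
    p = a := by
  obtain rfl : q = b + c - p := eq_sub_of_add_eq' hsum.symm
  have hb : doubleArea a p c + doubleArea a (b + c - p) c = doubleArea a b c := by
    simp only [doubleArea, Prod.fst_sub, Prod.snd_sub, Prod.fst_add, Prod.snd_add]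
    ring
  have hc : doubleArea a b p + doubleArea a b (b + c - p) = doubleArea a b c := by
    simp only [doubleArea, Prod.fst_sub, Prod.snd_sub, Prod.fst_add, Prod.snd_add]
    ring
  have hcorner := hT.mem_of_doubleArea_nonneg hK hp hside
    (by linarith [hT.le a hT.fst_mem _ hq c hT.thd_mem])
    (by linarith [hT.le a hT.fst_mem b hT.snd_mem _ hq])
  simpa [hpb, hpc] using hcorner

theorem add_sub_mem_extremePoints (hT : IsLargestTriangle (K.extremePoints ℝ) a b c)
    (hK : Convex ℝ K) (hR : ExtremeRhombus K) (hx : x ∈ K.extremePoints ℝ)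
    (hneg : doubleArea x b c < 0) : b + c - a ∈ K.extremePoints ℝ := by
  have hadd := doubleArea_add_add a b c x
  have hnotedge : ¬ IsExtreme ℝ K (segment ℝ b c) :=
    not_isExtreme_segment_of_doubleArea_neg hT.fst_mem.1 hx.1 hT.pos hneg
      (by linarith [hT.le a hT.fst_mem b hT.snd_mem x hx])
      (by linarith [hT.le a hT.fst_mem x hx c hT.thd_mem])
  obtain ⟨p, hp, q, hq, hpb, hpc, hqb, hqc, hsum⟩ :=
    (hR b hT.snd_mem c hT.thd_mem hT.rotate.fst_ne_snd).resolve_left hnotedge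
  have hsides : doubleArea p b c + doubleArea q b c = 0 := by
    obtain rfl : q = b + c - p := eq_sub_of_add_eq' hsum.symm
    simp only [doubleArea, Prod.fst_sub, Prod.snd_sub, Prod.fst_add, Prod.snd_add]
    ring
  rcases le_total 0 (doubleArea p b c) with hside | hside
  · obtain rfl := hT.eq_fst_of_add_eq_add hK hp hq hpb hpc hsum hside
    rwa [hsum, add_sub_cancel_left]
  · rw [add_comm p q] at hsum
    obtain rfl := hT.eq_fst_of_add_eq_add hK hq hp hqb hqc hsum (by linarith)
    rwa [hsum, add_sub_cancel_left]

theorem mem_of_add_sub_mem (hT : IsLargestTriangle (K.extremePoints ℝ) a b c)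
    (hK : Convex ℝ K) (hd : b + c - a ∈ K.extremePoints ℝ) (hx : x ∈ K.extremePoints ℝ)
    (hside : 0 ≤ doubleArea x b c) : x ∈ ({a, b, c} : Set (ℝ × ℝ)) := by
  have hb : doubleArea a x c + doubleArea (b + c - a) x b = doubleArea a b c := by
    simp only [doubleArea, Prod.fst_sub, Prod.snd_sub, Prod.fst_add, Prod.snd_add]
    ring
  have hc : doubleArea a b x + doubleArea (b + c - a) c x = doubleArea a b c := by
    simp only [doubleArea, Prod.fst_sub, Prod.snd_sub, Prod.fst_add, Prod.snd_add]
    ring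
  exact hT.mem_of_doubleArea_nonneg hK hx hside
    (by linarith [hT.le _ hd x hx b hT.snd_mem])
    (by linarith [hT.le _ hd c hT.thd_mem x hx])

theorem extremePoints_eq_of_add_sub_mem (hT : IsLargestTriangle (K.extremePoints ℝ) a b c)
    (hK : Convex ℝ K) (hd : b + c - a ∈ K.extremePoints ℝ) :
    K.extremePoints ℝ = {b, c, a, b + c - a} := by
  refine Subset.antisymm (fun x hx => ?_) ?_
  · rcases le_total 0 (doubleArea x b c) with hside | hside
    · have hmem := hT.mem_of_add_sub_mem hK hd hx hside
      simp only [mem_insert_iff, mem_singleton_iff] at hmem ⊢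
      tauto
    · have ha : c + b - (b + c - a) ∈ K.extremePoints ℝ := by
        rw [add_comm c b, sub_sub_cancel]
        exact hT.fst_mem
      have hmem := (hT.reflect hd).mem_of_add_sub_mem hK ha hx
        (by rw [doubleArea_swap]; linarith)
      simp only [mem_insert_iff, mem_singleton_iff] at hmem ⊢
      tauto
  · simp [insert_subset_iff, hT.fst_mem, hT.snd_mem, hT.thd_mem, hd]

theorem isParallelogram_extremePoints (hT : IsLargestTriangle (K.extremePoints ℝ) a b c)
    (hK : Convex ℝ K) (hR : ExtremeRhombus K) (hx : x ∈ K.extremePoints ℝ)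
    (hneg : doubleArea x b c < 0) : IsParallelogram (K.extremePoints ℝ) := by
  have hd := hT.add_sub_mem_extremePoints hK hR hx hneg
  have hS := hT.reflect hd
  have hopposite : a ≠ b + c - a := by
    intro h
    have hpos := hS.pos
    rw [← h, doubleArea_swap] at hpos
    linarith [hT.pos]
  exact ⟨b, c, a, b + c - a, hT.extremePoints_eq_of_add_sub_mem hK hd,
    hT.rotate.fst_ne_snd, hT.fst_ne_snd.symm, hS.rotate.rotate.fst_ne_snd,
    hT.rotate.rotate.fst_ne_snd, hS.fst_ne_snd.symm, hopposite, (add_sub_cancel _ _).symm⟩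

theorem extremePoints_eq (hT : IsLargestTriangle (K.extremePoints ℝ) a b c) (hK : Convex ℝ K)
    (hside : ∀ x ∈ K.extremePoints ℝ,
      0 ≤ doubleArea x b c ∧ 0 ≤ doubleArea x c a ∧ 0 ≤ doubleArea x a b) :
    K.extremePoints ℝ = {a, b, c} := by
  refine Subset.antisymm (fun x hx => ?_) hT.subset
  obtain ⟨ha, hb, hc⟩ := hside x hx
  rw [doubleArea_rotate] at hb
  rw [← doubleArea_rotate] at hc
  exact hT.mem_of_doubleArea_nonneg hK hx ha hb hc

end IsLargestTriangle

theorem ExtremeRhombus.ncard_eq_three_or_isParallelogram {K : Set (ℝ × ℝ)}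
    (hR : ExtremeRhombus K) (hcomp : IsCompact K) (hK : Convex ℝ K) (hcol : ¬ Collinear ℝ K) :
    (K.extremePoints ℝ).ncard = 3 ∨ IsParallelogram (K.extremePoints ℝ) := by
  obtain ⟨a, b, c, hT⟩ := exists_isLargestTriangle_extremePoints hcomp hcol
  by_cases! hside : ∀ x ∈ K.extremePoints ℝ,
      0 ≤ doubleArea x b c ∧ 0 ≤ doubleArea x c a ∧ 0 ≤ doubleArea x a b
  · exact .inl (ncard_eq_three.2 ⟨a, b, c, hT.fst_ne_snd, hT.rotate.rotate.fst_ne_snd.symm,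
      hT.rotate.fst_ne_snd, hT.extremePoints_eq hK hside⟩)
  · obtain ⟨x, hx, hneg⟩ := hside
    right
    by_cases! ha : doubleArea x b c < 0
    · exact hT.isParallelogram_extremePoints hK hR hx ha
    by_cases! hb : doubleArea x c a < 0
    · exact hT.rotate.isParallelogram_extremePoints hK hR hx hb
    · exact hT.rotate.rotate.isParallelogram_extremePoints hK hR hx (hneg ha hb)

end Plane

theorem exists_continuousLinearMap_bijOn {E G : Type*} [AddCommGroup E] [Module ℝ E]
    [TopologicalSpace E] [T2Space E] [IsTopologicalAddGroup E] [ContinuousSMul ℝ E]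
    [LocallyConvexSpace ℝ E] [AddCommGroup G] [Module ℝ G] [TopologicalSpace G] [T2Space G]
    [IsTopologicalAddGroup G] [ContinuousSMul ℝ G] [FiniteDimensional ℝ G] (W : Submodule ℝ E)
    [FiniteDimensional ℝ W] (hW : Module.finrank ℝ W = Module.finrank ℝ G) :
    ∃ φ : E →L[ℝ] G, BijOn φ W univ := by
  obtain ⟨π, hπ⟩ := Submodule.ClosedComplemented.of_finiteDimensional W
  let e : W ≃L[ℝ] G := .ofFinrankEq hW
  have hφ (w : W) : (e.toContinuousLinearMap ∘L π) w = e w := congrArg e (hπ w)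
  refine ⟨e.toContinuousLinearMap ∘L π, mapsTo_univ _ _, fun v hv w hw hvw => ?_, fun g _ => ?_⟩
  · have hvw' : e ⟨v, hv⟩ = e ⟨w, hw⟩ := by rw [← hφ, ← hφ, hvw]
    exact congrArg Subtype.val (e.injective hvw')
  · exact ⟨e.symm g, (e.symm g).2, by rw [hφ, e.apply_symm_apply]⟩

theorem FulfillsRhombus.extremeRhombus {E : Type*} [NormedAddCommGroup E] [NormedSpace ℝ E]
    {P : Set E} (hP : FulfillsRhombus P) : ExtremeRhombus P :=
  fun α hα β hβ hne => (hP α hα β hβ hne).imp_left IsExposed.isExtreme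

theorem ExtremeRhombus.ncard_eq_three_or_isParallelogram_of_finrank_eq_two {E : Type*}
    [AddCommGroup E] [Module ℝ E] [TopologicalSpace E] [T2Space E] [IsTopologicalAddGroup E]
    [ContinuousSMul ℝ E] [LocallyConvexSpace ℝ E] {F : Set E} (hR : ExtremeRhombus F)
    (hcomp : IsCompact F) (hconv : Convex ℝ F)
    (hdim : Module.finrank ℝ (vectorSpan ℝ F) = 2) :
    (F.extremePoints ℝ).ncard = 3 ∨ IsParallelogram (F.extremePoints ℝ) := by
  have : FiniteDimensional ℝ (vectorSpan ℝ F) := Module.finite_of_finrank_eq_succ hdim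
  obtain ⟨φ, hφ⟩ := exists_continuousLinearMap_bijOn (G := ℝ × ℝ) (vectorSpan ℝ F) (by simp [hdim])
  let ψ : E →ₗ[ℝ] ℝ × ℝ := φ
  have hinj : InjOn ψ (vectorSpan ℝ F) := hφ.injOn
  have hinjF : InjOn ψ F := injOn_of_injOn_vectorSpan hinj
  have hcol : ¬ Collinear ℝ (ψ '' F) := by
    have hmap : (vectorSpan ℝ F).map ψ = ⊤ := SetLike.coe_injective hφ.image_eq
    have hspan : vectorSpan ℝ (ψ '' F) = ⊤ := by
      rw [← hmap]
      exact ψ.toAffineMap.map_vectorSpan.symm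
    rw [collinear_iff_finrank_le_one, hspan]
    simp
  have hplane := (hR.image hconv ψ hinjF).ncard_eq_three_or_isParallelogram
    (hcomp.image φ.continuous) (hconv.linear_image ψ) hcol
  rw [← image_extremePoints_of_injOn hconv ψ hinjF,
    (hinjF.mono extremePoints_subset).ncard_image] at hplane
  exact hplane.imp_right (.of_image (hinj.mono (vectorSpan_mono ℝ extremePoints_subset)))

theorem stmt_4_general {E : Type*} [NormedAddCommGroup E] [NormedSpace ℝ E] {P F : Set E}
    (hRh : FulfillsRhombus P) (hF : IsExtreme ℝ P F) (hcomp : IsCompact F) (hconv : Convex ℝ F)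
    (hdim : Module.finrank ℝ (vectorSpan ℝ F) = 2) :
    (∃ s : Finset E, ↑s = F.extremePoints ℝ ∧ s.card = 3) ∨
    (∃ α β α' β' : E, F.extremePoints ℝ = {α, β, α', β'} ∧
      α ≠ β ∧ α ≠ α' ∧ α ≠ β' ∧ β ≠ α' ∧ β ≠ β' ∧ α' ≠ β' ∧
      α + β = α' + β') := by
  have hR : ExtremeRhombus F := hRh.extremeRhombus.of_isExtreme hF hconv
  refine (hR.ncard_eq_three_or_isParallelogram_of_finrank_eq_two hcomp hconv hdim).imp_left
    fun hcard => ?_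
  have hfin : (F.extremePoints ℝ).Finite := finite_of_ncard_ne_zero (by simp [hcard])
  exact ⟨hfin.toFinset, hfin.coe_toFinset, by rw [← ncard_eq_toFinset_card _ hfin, hcard]⟩

theorem stmt_4 {d : ℕ} (P : Set (EuclideanSpace ℝ (Fin d)))
    (hP : ∃ S : Finset (EuclideanSpace ℝ (Fin d)), P = convexHull ℝ ↑S)
    (hRh : FulfillsRhombus P)
    (F : Set (EuclideanSpace ℝ (Fin d))) (hF : IsExposed ℝ P F)
    (hdim : Module.finrank ℝ (vectorSpan ℝ F) = 2) :
    (∃ s : Finset (EuclideanSpace ℝ (Fin d)), ↑s = Set.extremePoints ℝ F ∧ s.card = 3) ∨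
    (∃ α β α' β' : EuclideanSpace ℝ (Fin d),
      Set.extremePoints ℝ F = {α, β, α', β'} ∧
      α ≠ β ∧ α ≠ α' ∧ α ≠ β' ∧ β ≠ α' ∧ β ≠ β' ∧ α' ≠ β' ∧
      α + β = α' + β') := by
  obtain ⟨S, rfl⟩ := hP
  exact stmt_4_general hRh hF.isExtreme (hF.isCompact (S.finite_toSet.isCompact_convexHull ℝ))
    (hF.convex (convex_convexHull ℝ _)) hdim
end

section
/- Let P ⊆ ℝ^d and Q ⊆ ℝ^e be polytopes. The product polytope P × Q ⊆ ℝ^{d+e} fulfills the rhombus criterion if and only if both P and Q fulfill the rhombus criterion. -/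
/-!
Over `P ×ˢ Q` a linear functional splits as `l (x, y) = l₁ x + l₂ y`, so its maximum is attained
exactly on the product of the faces where `l₁` and `l₂` are maximal. Since every vertex `q` of the
polytope `Q` is exposed, the segment from `(α, q)` to `(β, q)` is therefore an edge of `P ×ˢ Q` iff
the segment from `α` to `β` is an edge of `P`. Rhombi on these two vertices also correspond, because
the extreme point `q` is the midpoint of two points of `Q` only when both are `q`. Two vertices of
`P ×ˢ Q` that differ in both coordinates always form a rhombus with the two vertices obtained by
exchanging their second coordinates.
-/

section

variable {𝕜 E F : Type*} [TopologicalSpace 𝕜] [Ring 𝕜] [PartialOrder 𝕜]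
  [AddCommMonoid E] [TopologicalSpace E] [Module 𝕜 E]
  [AddCommMonoid F] [TopologicalSpace F] [Module 𝕜 F]

theorem toExposed_image (l : StrongDual 𝕜 F) (f : E →L[𝕜] F) (P : Set E) :
    l.toExposed (f '' P) = f '' (l.comp f).toExposed P := by
  ext y
  constructor
  · rintro ⟨⟨x, hx, rfl⟩, hmax⟩
    exact ⟨x, ⟨hx, fun z hz => hmax (f z) ⟨z, hz, rfl⟩⟩, rfl⟩
  · rintro ⟨x, ⟨hx, hmax⟩, rfl⟩
    exact ⟨⟨x, hx, rfl⟩, Set.forall_mem_image.2 hmax⟩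

theorem isExposed_image_iff (e : E ≃L[𝕜] F) {P A : Set E} :
    IsExposed 𝕜 (e '' P) (e '' A) ↔ IsExposed 𝕜 P A := by
  refine imp_congr Set.image_nonempty ⟨fun ⟨l, hl⟩ => ?_, fun ⟨l, hl⟩ => ?_⟩
  · refine ⟨l.comp (e : E →L[𝕜] F), e.injective.image_injective ?_⟩
    exact hl.trans (toExposed_image l (e : E →L[𝕜] F) P)
  · refine ⟨l.comp (e.symm : F →L[𝕜] E), ?_⟩
    have hcomp : (l.comp (e.symm : F →L[𝕜] E)).comp (e : E →L[𝕜] F) = l := by ext; simp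
    have himage := toExposed_image (l.comp (e.symm : F →L[𝕜] E)) (e : E →L[𝕜] F) P
    rw [hcomp] at himage
    exact (congrArg (e '' ·) hl).trans himage.symm

variable [IsOrderedAddMonoid 𝕜] [ContinuousAdd 𝕜]

theorem toExposed_coprod_prod (l : StrongDual 𝕜 E) (m : StrongDual 𝕜 F) (P : Set E) (Q : Set F) :
    (l.coprod m).toExposed (P ×ˢ Q) = l.toExposed P ×ˢ m.toExposed Q := by
  ext ⟨x, y⟩
  constructor
  · rintro ⟨⟨hx, hy⟩, hmax⟩
    exact ⟨⟨hx, fun z hz => by simpa using hmax (z, y) ⟨hz, hy⟩⟩,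
      ⟨hy, fun z hz => by simpa using hmax (x, z) ⟨hx, hz⟩⟩⟩
  · rintro ⟨⟨hx, hxmax⟩, hy, hymax⟩
    exact ⟨⟨hx, hy⟩, fun z hz => add_le_add (hxmax z.1 hz.1) (hymax z.2 hz.2)⟩

theorem isExposed_prod_iff {P A : Set E} {Q B : Set F} (hA : A.Nonempty) (hB : B.Nonempty) :
    IsExposed 𝕜 (P ×ˢ Q) (A ×ˢ B) ↔ IsExposed 𝕜 P A ∧ IsExposed 𝕜 Q B := by
  constructor
  · intro h
    obtain ⟨l, hl⟩ := h (hA.prod hB)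
    have hsplit : A ×ˢ B = (l.comp (.inl 𝕜 E F)).toExposed P ×ˢ
        (l.comp (.inr 𝕜 E F)).toExposed Q := by
      have hcoprod : (l.comp (.inl 𝕜 E F)).coprod (l.comp (.inr 𝕜 E F)) = l :=
        ContinuousLinearMap.coe_injective (LinearMap.coprod_comp_inl_inr _)
      rw [← toExposed_coprod_prod, hcoprod]
      exact hl
    obtain ⟨rfl, rfl⟩ := (Set.prod_eq_prod_iff_of_nonempty (hA.prod hB)).1 hsplit
    exact ⟨ContinuousLinearMap.toExposed.isExposed, ContinuousLinearMap.toExposed.isExposed⟩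
  · rintro ⟨hPA, hQB⟩
    obtain ⟨l, rfl⟩ := hPA hA
    obtain ⟨m, rfl⟩ := hQB hB
    exact fun _ => ⟨l.coprod m, (toExposed_coprod_prod l m P Q).symm⟩

end

theorem convex_insert_setOf_lt {𝕜 E : Type*} [Ring 𝕜] [LinearOrder 𝕜] [IsStrictOrderedRing 𝕜]
    [AddCommMonoid E] [Module 𝕜 E] (f : E →ₗ[𝕜] 𝕜) (x : E) :
    Convex 𝕜 (insert x {y | f y < f x}) := by
  refine convex_iff_pairwise_pos.2 fun y hy z hz hyz a b ha hb hab => Or.inr ?_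
  have hsum : a * f x + b * f x = f x := by rw [← add_mul, hab, one_mul]
  suffices a * f y + b * f z < a * f x + b * f x by simpa [hsum] using this
  rcases hy with rfl | hy <;> rcases hz with rfl | hz
  · exact absurd rfl hyz
  · gcongr
    exact hz
  · gcongr
    exact hy
  · gcongr
    exacts [hy, hz]

theorem extremePoints_convexHull_subset_exposedPoints {E : Type*} [AddCommGroup E] [Module ℝ E]
    [TopologicalSpace E] [IsTopologicalAddGroup E] [ContinuousSMul ℝ E] [LocallyConvexSpace ℝ E]
    [T2Space E] {s : Set E} (hs : s.Finite) :
    (convexHull ℝ s).extremePoints ℝ ⊆ (convexHull ℝ s).exposedPoints ℝ := by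
  intro q hq
  have hnotMem : q ∉ convexHull ℝ (s \ {q}) := fun h =>
    ((convex_convexHull ℝ s).mem_extremePoints_iff_mem_sdiff_convexHull_sdiff.1 hq).2
      (convexHull_mono (Set.sdiff_subset_sdiff_left (subset_convexHull ℝ s)) h)
  obtain ⟨f, u, hfu, huq⟩ := geometric_hahn_banach_closed_point (convex_convexHull ℝ (s \ {q}))
    (hs.sdiff.isClosed_convexHull ℝ) hnotMem
  have hvertices : s ⊆ insert q {y | f y < f q} := fun y hy =>
    or_iff_not_imp_left.2 fun hyq => (hfu y (subset_convexHull ℝ _ ⟨hy, hyq⟩)).trans huq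
  have hhull : convexHull ℝ s ⊆ insert q {y | f y < f q} :=
    convexHull_min hvertices (convex_insert_setOf_lt (f : E →ₗ[ℝ] ℝ) q)
  refine ⟨hq.1, f, fun y hy => ?_⟩
  rcases hhull hy with rfl | hlt
  · exact ⟨le_rfl, fun _ => rfl⟩
  · exact ⟨hlt.le, fun hle => absurd hlt hle.not_gt⟩

theorem eq_and_eq_of_add_self_eq_add_of_mem_extremePoints {𝕜 E : Type*} [Ring 𝕜] [LinearOrder 𝕜]
    [IsStrictOrderedRing 𝕜] [Invertible (2 : 𝕜)] [AddCommGroup E] [Module 𝕜 E]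
    {P : Set E} {q a b : E}
    (hq : q ∈ P.extremePoints 𝕜) (ha : a ∈ P) (hb : b ∈ P) (h : q + q = a + b) :
    a = q ∧ b = q := by
  refine (mem_extremePoints.1 hq).2 a ha b hb ?_
  have hmid : midpoint 𝕜 a b = q := by
    rw [midpoint_eq_smul_add, ← h, ← two_smul 𝕜 q, invOf_smul_smul]
  exact hmid ▸ midpoint_mem_openSegment a b

section

variable {E F : Type*} [AddCommGroup E] [Module ℝ E] [TopologicalSpace E]
  [AddCommGroup F] [Module ℝ F] [TopologicalSpace F]

/-- The rhombus criterion for a single pair of vertices `α, β` of `P`: they span an edge of `P`,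
or their midpoint is also the midpoint of two other vertices. As in `FulfillsRhombus`,
an edge is encoded as an exposed segment. -/
def RhombusPair (P : Set E) (α β : E) : Prop :=
  IsExposed ℝ P (segment ℝ α β) ∨
    ∃ α' ∈ Set.extremePoints ℝ P, ∃ β' ∈ Set.extremePoints ℝ P,
      α' ≠ α ∧ α' ≠ β ∧ β' ≠ α ∧ β' ≠ β ∧ α + β = α' + β'

namespace RhombusPair

variable {P : Set E} {Q : Set F}

theorem image_iff (e : E ≃L[ℝ] F) {α β : E} :
    RhombusPair (e '' P) (e α) (e β) ↔ RhombusPair P α β := by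
  refine or_congr ?_ ?_
  · rw [← isExposed_image_iff e]
    exact iff_of_eq <| congrArg _ (image_segment ℝ (e : E →ₗ[ℝ] F).toAffineMap α β).symm
  · simp only [← image_extremePoints e, Set.exists_mem_image, ← map_add, e.injective.ne_iff,
      e.injective.eq_iff]

theorem prod_swap_iff {α β : E × F} :
    RhombusPair (Q ×ˢ P) α.swap β.swap ↔ RhombusPair (P ×ˢ Q) α β := by
  rw [← Set.image_swap_prod]
  exact image_iff (ContinuousLinearEquiv.prodComm ℝ E F)

theorem prodMk_right_iff {α β : E} {q : F} (hq : q ∈ Q.exposedPoints ℝ) :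
    RhombusPair (P ×ˢ Q) (α, q) (β, q) ↔ RhombusPair P α β := by
  have hqext := exposedPoints_subset_extremePoints hq
  refine or_congr ?_ ?_
  · rw [← Prod.image_mk_segment_left, ← Set.prod_singleton,
      isExposed_prod_iff ⟨α, left_mem_segment ℝ α β⟩ (Set.singleton_nonempty q),
      and_iff_left (mem_exposedPoints_iff_exposed_singleton.1 hq)]
  · rw [extremePoints_prod]
    constructor
    · rintro ⟨⟨α', a⟩, ⟨hα', ha⟩, ⟨β', b⟩, ⟨hβ', hb⟩, hrhombus⟩
      obtain ⟨rfl, rfl⟩ := eq_and_eq_of_add_self_eq_add_of_mem_extremePoints hqext ha.1 hb.1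
        (congrArg Prod.snd hrhombus.2.2.2.2)
      exact ⟨α', hα', β', hβ', by simpa using hrhombus⟩
    · rintro ⟨α', hα', β', hβ', hrhombus⟩
      exact ⟨(α', q), ⟨hα', hqext⟩, (β', q), ⟨hβ', hqext⟩, by simpa using hrhombus⟩

theorem prodMk_left_iff {p : E} {α β : F} (hp : p ∈ P.exposedPoints ℝ) :
    RhombusPair (P ×ˢ Q) (p, α) (p, β) ↔ RhombusPair Q α β :=
  prod_swap_iff.symm.trans (prodMk_right_iff hp)

theorem prod_of_ne {α β : E × F} (hα : α ∈ (P ×ˢ Q).extremePoints ℝ)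
    (hβ : β ∈ (P ×ˢ Q).extremePoints ℝ) (hfst : α.1 ≠ β.1) (hsnd : α.2 ≠ β.2) :
    RhombusPair (P ×ˢ Q) α β := by
  rw [extremePoints_prod] at hα hβ
  refine Or.inr ?_
  rw [extremePoints_prod]
  exact ⟨(α.1, β.2), ⟨hα.1, hβ.2⟩, (β.1, α.2), ⟨hβ.1, hα.2⟩, by
    simp [Prod.ext_iff, hfst, hsnd, hfst.symm, hsnd.symm, add_comm]⟩

end RhombusPair

end

theorem fulfillsRhombus_iff_pairwise {E : Type*} [NormedAddCommGroup E] [NormedSpace ℝ E]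
    {P : Set E} : FulfillsRhombus P ↔ (P.extremePoints ℝ).Pairwise (RhombusPair P) :=
  Iff.rfl

theorem stmt_5_general {E F : Type*} [NormedAddCommGroup E] [NormedSpace ℝ E]
    [NormedAddCommGroup F] [NormedSpace ℝ F] {P : Set E} {Q : Set F}
    (hP : P.extremePoints ℝ ⊆ P.exposedPoints ℝ) (hP₀ : (P.extremePoints ℝ).Nonempty)
    (hQ : Q.extremePoints ℝ ⊆ Q.exposedPoints ℝ) (hQ₀ : (Q.extremePoints ℝ).Nonempty) :
    FulfillsRhombus (P ×ˢ Q) ↔ FulfillsRhombus P ∧ FulfillsRhombus Q := by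
  simp only [fulfillsRhombus_iff_pairwise]
  constructor
  · intro h
    obtain ⟨p, hp⟩ := hP₀
    obtain ⟨q, hq⟩ := hQ₀
    rw [extremePoints_prod] at h
    exact ⟨fun α hα β hβ hne => (RhombusPair.prodMk_right_iff (hQ hq)).1 <|
        h (Set.mk_mem_prod hα hq) (Set.mk_mem_prod hβ hq) (by simpa using hne),
      fun α hα β hβ hne => (RhombusPair.prodMk_left_iff (hP hp)).1 <|
        h (Set.mk_mem_prod hp hα) (Set.mk_mem_prod hp hβ) (by simpa using hne)⟩
  · rintro ⟨hPpair, hQpair⟩ ⟨α₁, α₂⟩ hα ⟨β₁, β₂⟩ hβ hne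
    have ⟨hα₁, hα₂⟩ := extremePoints_prod (𝕜 := ℝ) P Q ▸ hα
    have ⟨hβ₁, hβ₂⟩ := extremePoints_prod (𝕜 := ℝ) P Q ▸ hβ
    by_cases hfst : α₁ = β₁
    · subst hfst
      exact (RhombusPair.prodMk_left_iff (hP hα₁)).2 (hQpair hα₂ hβ₂ (by simpa using hne))
    by_cases hsnd : α₂ = β₂
    · subst hsnd
      exact (RhombusPair.prodMk_right_iff (hQ hα₂)).2 (hPpair hα₁ hβ₁ hfst)
    exact RhombusPair.prod_of_ne hα hβ hfst hsnd

theorem stmt_5 {E F : Type*} [NormedAddCommGroup E] [NormedSpace ℝ E]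
    [NormedAddCommGroup F] [NormedSpace ℝ F]
    (P : Set E) (Q : Set F)
    (hP : ∃ S : Finset E, S.Nonempty ∧ P = convexHull ℝ ↑S)
    (hQ : ∃ S : Finset F, S.Nonempty ∧ Q = convexHull ℝ ↑S) :
    FulfillsRhombus (P ×ˢ Q) ↔ FulfillsRhombus P ∧ FulfillsRhombus Q := by
  obtain ⟨S, hS, rfl⟩ := hP
  obtain ⟨T, hT, rfl⟩ := hQ
  exact stmt_5_general
    (extremePoints_convexHull_subset_exposedPoints S.finite_toSet)
    ((S.finite_toSet.isCompact_convexHull ℝ).extremePoints_nonempty hS.to_set.convexHull)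
    (extremePoints_convexHull_subset_exposedPoints T.finite_toSet)
    ((T.finite_toSet.isCompact_convexHull ℝ).extremePoints_nonempty hT.to_set.convexHull)
end

section
/- The k-assignment polytope M_{m,n,k} fulfills the rhombus criterion: for any two vertices α, β of M_{m,n,k} such that conv(α, β) is not an edge of M_{m,n,k}, there exist vertices α', β' of M_{m,n,k} outside {α, β} with α + β = α' + β'. -/
/-- `x` is a vertex of the `k`-assignment polytope: a 0/1 `m × n` matrix with exactly `k`
ones, no two in the same row or column (equivalently, a `k`-matching in `K_{m,n}`). -/
def IsAssignmentVec (m n k : ℕ) (x : EuclideanSpace ℝ (Fin m × Fin n)) : Prop :=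
  ∃ M : Finset (Fin m × Fin n), M.card = k ∧
    (∀ p ∈ M, ∀ q ∈ M, p.1 = q.1 → p = q) ∧
    (∀ p ∈ M, ∀ q ∈ M, p.2 = q.2 → p = q) ∧
    (∀ p, x p = if p ∈ M then 1 else 0)

/-- The `k`-assignment polytope `M_{m,n,k}`. -/
noncomputable def assignmentPolytope (m n k : ℕ) : Set (EuclideanSpace ℝ (Fin m × Fin n)) :=
  convexHull ℝ {x | IsAssignmentVec m n k x}

/-!
A `k`-matching in `K_{m,n}` is a `k`-element independent set of the rook's graph `K_m □ K_n`, so it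
suffices to treat the polytope of `k`-element independent sets of an arbitrary graph. For two such
sets `A` and `B`, the inequalities

* `∑_{v ∈ A ∪ B} x_v ≤ k`,
* `∑_{v ∈ A ∩ B} x_v ≤ |A ∩ B|`,
* `x_p + x_q ≤ 1` for every edge `pq` with `p ∈ A` and `q ∈ B`

are valid and tight at `A` and `B`, hence so is their sum. If the segment from `A` to `B` is not an
edge, the sum is also tight at a third vertex `M`. Then `A ∩ B ⊆ M ⊆ A ∪ B`, and as `M` meets every
edge between `A` and `B`, its complement in the multiset sum of `A` and `B`, which is `A ∆ B ∆ M`,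
is independent too.
-/

open Finset SimpleGraph
open scoped symmDiff

section Convexity

variable {𝕜 E : Type*} [Field 𝕜] [LinearOrder 𝕜] [IsStrictOrderedRing 𝕜]
  [AddCommGroup E] [Module 𝕜 E] {S : Set E}

lemma mem_convexHull_sep_eq_of_map_eq {l : E →ₗ[𝕜] 𝕜} {c : 𝕜} (hS : ∀ x ∈ S, l x ≤ c) {x : E}
    (hx : x ∈ convexHull 𝕜 S) (hxc : l x = c) : x ∈ convexHull 𝕜 {x ∈ S | l x = c} := by
  let T : Set E := {x | l x ≤ c ∧ (l x = c → x ∈ convexHull 𝕜 {x ∈ S | l x = c})}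
  have hST : S ⊆ T := fun x hx => ⟨hS x hx, fun h => subset_convexHull 𝕜 _ ⟨hx, h⟩⟩
  have hT : Convex 𝕜 T := by
    refine convex_iff_forall_pos.2 ?_
    rintro x ⟨hx, hxT⟩ y ⟨hy, hyT⟩ a b ha hb hab
    have hax : a * l x ≤ a * c := mul_le_mul_of_nonneg_left hx ha.le
    have hby : b * l y ≤ b * c := mul_le_mul_of_nonneg_left hy hb.le
    have hc : a * c + b * c = c := by rw [← add_mul, hab, one_mul]
    have hmap : l (a • x + b • y) = a * l x + b * l y := by simp
    refine ⟨by linarith, fun h => ?_⟩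
    have hxc : l x = c := mul_left_cancel₀ ha.ne' (by linarith)
    have hyc : l y = c := mul_left_cancel₀ hb.ne' (by linarith)
    exact convex_convexHull 𝕜 _ (hxT hxc) (hyT hyc) ha.le hb.le hab
  exact (convexHull_min hST hT hx).2 hxc

lemma isExposed_convexHull_sep_eq [TopologicalSpace 𝕜] [TopologicalSpace E] {l : StrongDual 𝕜 E}
    {c : 𝕜} (hS : ∀ x ∈ S, l x ≤ c) :
    IsExposed 𝕜 (convexHull 𝕜 S) (convexHull 𝕜 {x ∈ S | l x = c}) := by
  intro hne
  obtain ⟨x₀, hx₀S, hx₀⟩ := convexHull_nonempty_iff.1 hne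
  have hle : ∀ x ∈ convexHull 𝕜 S, l x ≤ c :=
    convexHull_min hS (convex_halfSpace_le l.toLinearMap.isLinear c)
  have heq : ∀ x ∈ convexHull 𝕜 {x ∈ S | l x = c}, l x = c :=
    convexHull_min (fun _ hx => hx.2) (convex_hyperplane l.toLinearMap.isLinear c)
  refine ⟨l, Set.Subset.antisymm (fun x hx => ⟨?_, fun y hy => ?_⟩) fun x hx => ?_⟩
  · exact convexHull_mono (Set.sep_subset _ _) hx
  · exact (hle y hy).trans_eq (heq x hx).symm
  · have hcx : c ≤ l x := hx₀.symm.trans_le (hx.2 x₀ (subset_convexHull 𝕜 S hx₀S))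
    exact mem_convexHull_sep_eq_of_map_eq (l := l.toLinearMap) hS hx.1 ((hle x hx.1).antisymm hcx)

end Convexity

section IndepSetPolytope

variable {V : Type*} [DecidableEq V]

/-- The 0/1 characteristic vector of a finite set of vertices. -/
def indicatorVec (S : Finset V) : EuclideanSpace ℝ V :=
  WithLp.toLp 2 fun v => if v ∈ S then 1 else 0

/-- `x` is a vertex of the polytope of `k`-element independent sets of `G`. -/
def IsIndepSetVec (G : SimpleGraph V) (k : ℕ) (x : EuclideanSpace ℝ V) : Prop :=
  ∃ S : Finset V, G.IsNIndepSet k S ∧ indicatorVec S = x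

/-- The polytope of `k`-element independent sets of `G`. -/
def indepSetPolytope (G : SimpleGraph V) (k : ℕ) : Set (EuclideanSpace ℝ V) :=
  convexHull ℝ {x | IsIndepSetVec G k x}

/-- `M` lies between `A ∩ B` and `A ∪ B` and meets every edge of `G` between `A` and `B`. For
independent sets this says that the characteristic vector of `M` attains equality in all the
inequalities summed up in `exposingFunctional`. -/
structure IsIntermediate (G : SimpleGraph V) (A B M : Finset V) : Prop where
  inter_subset : A ∩ B ⊆ M
  subset_union : M ⊆ A ∪ B
  mem_or_mem_of_adj : ∀ p ∈ A, ∀ q ∈ B, G.Adj p q → p ∈ M ∨ q ∈ M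

variable {G : SimpleGraph V} {A B M : Finset V} {k : ℕ}

namespace IsIntermediate

lemma left : IsIntermediate G A B A :=
  ⟨inter_subset_left, subset_union_left, fun _ hp _ _ _ => .inl hp⟩

lemma right : IsIntermediate G A B B :=
  ⟨inter_subset_right, subset_union_right, fun _ _ _ hq _ => .inr hq⟩

lemma indicatorVec_add_indicatorVec (h : IsIntermediate G A B M) :
    indicatorVec A + indicatorVec B = indicatorVec M + indicatorVec (A ∆ B ∆ M) := by
  ext v
  have hinter := @h.inter_subset v
  have hunion := @h.subset_union v
  simp only [indicatorVec, PiLp.add_apply, mem_symmDiff, mem_inter, mem_union] at hinter hunion ⊢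
  grind

lemma isIndepSet_symmDiff (h : IsIntermediate G A B M) (hA : G.IsIndepSet (A : Set V))
    (hB : G.IsIndepSet (B : Set V)) : G.IsIndepSet (A ∆ B ∆ M : Finset V) := by
  have not_adj {p q : V} (hp : p ∈ A ∆ B ∆ M) (hq : q ∈ A ∆ B ∆ M) (hpA : p ∈ A) (hqB : q ∈ B) :
      ¬ G.Adj p q := fun hadj => by
    have hpB : p ∉ B := fun hpB => hB hpB hqB hadj.ne hadj
    have hqA : q ∉ A := fun hqA => hA hpA hqA hadj.ne hadj
    have hpM : p ∉ M := by grind [mem_symmDiff]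
    have hqM : q ∉ M := by grind [mem_symmDiff]
    exact (h.mem_or_mem_of_adj p hpA q hqB hadj).elim hpM hqM
  have mem_or {p : V} (hp : p ∈ A ∆ B ∆ M) : p ∈ A ∨ p ∈ B := by
    have hunion := @h.subset_union p
    grind [mem_symmDiff]
  intro p hp q hq hne
  rcases mem_or hp with hpA | hpB <;> rcases mem_or hq with hqA | hqB
  · exact hA hpA hqA hne
  · exact not_adj hp hq hpA hqB
  · exact fun hadj => not_adj hq hp hqA hpB hadj.symm
  · exact hB hpB hqB hne

lemma card_add_card_symmDiff (h : IsIntermediate G A B M) :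
    #M + #(A ∆ B ∆ M) = #A + #B := by
  have hinter := h.inter_subset
  have hunion := h.subset_union
  have hM_union : M ∪ A ∆ B ∆ M = A ∪ B := by grind [mem_symmDiff]
  have hM_inter : M ∩ A ∆ B ∆ M = A ∩ B := by grind [mem_symmDiff]
  rw [← card_union_add_card_inter, hM_union, hM_inter, card_union_add_card_inter]

lemma isNIndepSet_symmDiff (h : IsIntermediate G A B M) (hA : G.IsNIndepSet k A)
    (hB : G.IsNIndepSet k B) (hM : #M = k) : G.IsNIndepSet k (A ∆ B ∆ M) where
  isIndepSet := h.isIndepSet_symmDiff hA.isIndepSet hB.isIndepSet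
  card_eq := by linarith [h.card_add_card_symmDiff, hA.card_eq, hB.card_eq]

end IsIntermediate

section ExposingFunctional

variable [DecidableRel G.Adj]

variable (G A B) in
/-- The sum of the left-hand sides of the inequalities `∑_{v ∈ A ∪ B} x_v ≤ k`,
`∑_{v ∈ A ∩ B} x_v ≤ |A ∩ B|` and `x_p + x_q ≤ 1` for the edges `pq` between `A` and `B`; the first
two are combined into `∑_{v ∈ A} x_v + ∑_{v ∈ B} x_v`. -/
noncomputable def exposingFunctional : StrongDual ℝ (EuclideanSpace ℝ V) :=
  ∑ v ∈ A, EuclideanSpace.proj v + ∑ v ∈ B, EuclideanSpace.proj v +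
    ∑ e ∈ G.interedges A B, (EuclideanSpace.proj e.1 + EuclideanSpace.proj e.2)

lemma exposingFunctional_indicatorVec (hM : G.IsIndepSet (M : Set V)) :
    exposingFunctional G A B (indicatorVec M) =
      ((#((A ∪ B) ∩ M) + #(A ∩ B ∩ M) +
        #{e ∈ G.interedges A B | e.1 ∈ M ∨ e.2 ∈ M} : ℕ) : ℝ) := by
  have hedge : ∀ e ∈ G.interedges A B, indicatorVec M e.1 + indicatorVec M e.2 =
      if e.1 ∈ M ∨ e.2 ∈ M then 1 else 0 := fun e he => by
    have hadj : G.Adj e.1 e.2 := (G.mem_interedges_iff.1 he).2.2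
    have hnot_both : ¬ (e.1 ∈ M ∧ e.2 ∈ M) := fun h => hM h.1 h.2 hadj.ne hadj
    simp only [indicatorVec]
    grind
  have hsum (S : Finset V) : ∑ v ∈ S, indicatorVec M v = #(S ∩ M) := by
    simp [indicatorVec]
  have hcard : #((A ∪ B) ∩ M) + #(A ∩ B ∩ M) = #(A ∩ M) + #(B ∩ M) := by
    rw [union_inter_distrib_right, inter_inter_distrib_right, card_union_add_card_inter]
  calc exposingFunctional G A B (indicatorVec M)
      = ∑ v ∈ A, indicatorVec M v + ∑ v ∈ B, indicatorVec M v +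
          ∑ e ∈ G.interedges A B, (indicatorVec M e.1 + indicatorVec M e.2) := by
        simp [exposingFunctional]
    _ = #(A ∩ M) + #(B ∩ M) + #{e ∈ G.interedges A B | e.1 ∈ M ∨ e.2 ∈ M} := by
        rw [hsum, hsum, sum_congr rfl hedge, sum_boole]
    _ = _ := by rw [hcard]; push_cast; rfl

lemma exposingFunctional_le (hM : G.IsIndepSet (M : Set V)) :
    exposingFunctional G A B (indicatorVec M) ≤ (#M + #(A ∩ B) + #(G.interedges A B) : ℕ) := by
  rw [exposingFunctional_indicatorVec hM, Nat.cast_le]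
  exact add_le_add (add_le_add (card_le_card inter_subset_right) (card_le_card inter_subset_left))
    (card_filter_le _ _)

lemma exposingFunctional_eq_iff (hM : G.IsIndepSet (M : Set V)) :
    exposingFunctional G A B (indicatorVec M) = (#M + #(A ∩ B) + #(G.interedges A B) : ℕ) ↔
      IsIntermediate G A B M := by
  have hunion_le : #((A ∪ B) ∩ M) ≤ #M := card_le_card inter_subset_right
  have hinter_le : #(A ∩ B ∩ M) ≤ #(A ∩ B) := card_le_card inter_subset_left
  have hedges_le := card_filter_le (G.interedges A B) fun e => e.1 ∈ M ∨ e.2 ∈ M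
  have hunion : #M ≤ #((A ∪ B) ∩ M) ↔ M ⊆ A ∪ B := by
    rw [eq_iff_card_le_of_subset inter_subset_right, inter_eq_right]
  have hinter : #(A ∩ B) ≤ #(A ∩ B ∩ M) ↔ A ∩ B ⊆ M := by
    rw [eq_iff_card_le_of_subset inter_subset_left, inter_eq_left]
  have hedges : #{e ∈ G.interedges A B | e.1 ∈ M ∨ e.2 ∈ M} = #(G.interedges A B) ↔
      ∀ p ∈ A, ∀ q ∈ B, G.Adj p q → p ∈ M ∨ q ∈ M := by
    simp only [card_filter_eq_iff, G.mem_interedges_iff, Prod.forall, and_imp]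
    grind
  rw [exposingFunctional_indicatorVec hM, Nat.cast_inj]
  refine ⟨fun h => ⟨hinter.1 (by omega), hunion.1 (by omega), hedges.1 (by omega)⟩, fun h => ?_⟩
  linarith [hinter.2 h.inter_subset, hunion.2 h.subset_union, hedges.2 h.mem_or_mem_of_adj]

end ExposingFunctional

lemma exists_isIntermediate_of_not_isExposed (hA : G.IsNIndepSet k A) (hB : G.IsNIndepSet k B)
    (hnonedge : ¬ IsExposed ℝ (indepSetPolytope G k)
      (segment ℝ (indicatorVec A) (indicatorVec B))) :
    ∃ M, G.IsNIndepSet k M ∧ IsIntermediate G A B M ∧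
      indicatorVec M ≠ indicatorVec A ∧ indicatorVec M ≠ indicatorVec B := by
  classical
  by_contra! hcon
  let c : ℝ := (k + #(A ∩ B) + #(G.interedges A B) : ℕ)
  have hle : ∀ x ∈ {x | IsIndepSetVec G k x}, exposingFunctional G A B x ≤ c := by
    rintro _ ⟨M, hM, rfl⟩
    simpa only [c, hM.card_eq] using exposingFunctional_le (A := A) (B := B) hM.isIndepSet
  have htight {M : Finset V} (hM : G.IsNIndepSet k M) :
      exposingFunctional G A B (indicatorVec M) = c ↔ IsIntermediate G A B M := by
    rw [← exposingFunctional_eq_iff hM.isIndepSet, hM.card_eq]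
  have hface : {x ∈ {x | IsIndepSetVec G k x} | exposingFunctional G A B x = c} =
      {indicatorVec A, indicatorVec B} := by
    refine Set.Subset.antisymm ?_ (Set.pair_subset ?_ ?_)
    · rintro _ ⟨⟨M, hM, rfl⟩, hMc⟩
      exact or_iff_not_imp_left.2 (hcon M hM ((htight hM).1 hMc))
    · exact ⟨⟨A, hA, rfl⟩, (htight hA).2 .left⟩
    · exact ⟨⟨B, hB, rfl⟩, (htight hB).2 .right⟩
  apply hnonedge
  rw [← convexHull_pair, ← hface]
  exact isExposed_convexHull_sep_eq hle

theorem stmt_16_general (G : SimpleGraph V) {k : ℕ} (α β : EuclideanSpace ℝ V)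
    (hα : IsIndepSetVec G k α) (hβ : IsIndepSetVec G k β)
    (hnonedge : ¬ IsExposed ℝ (indepSetPolytope G k) (segment ℝ α β)) :
    ∃ α' β' : EuclideanSpace ℝ V, IsIndepSetVec G k α' ∧ IsIndepSetVec G k β' ∧
      α' ≠ α ∧ α' ≠ β ∧ β' ≠ α ∧ β' ≠ β ∧ α + β = α' + β' := by
  obtain ⟨A, hA, rfl⟩ := hα
  obtain ⟨B, hB, rfl⟩ := hβ
  obtain ⟨M, hM, hAMB, hMA, hMB⟩ := exists_isIntermediate_of_not_isExposed hA hB hnonedge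
  have hsum := hAMB.indicatorVec_add_indicatorVec
  have hN := hAMB.isNIndepSet_symmDiff hA hB hM.card_eq
  refine ⟨_, _, ⟨M, hM, rfl⟩, ⟨_, hN, rfl⟩, hMA, hMB, fun h => hMB ?_, fun h => hMA ?_, hsum⟩
  · rw [h, add_comm] at hsum
    exact (add_right_cancel hsum).symm
  · rw [h] at hsum
    exact (add_right_cancel hsum).symm

end IndepSetPolytope

section RookGraph

lemma isIndepSet_top_boxProd_top_iff {V W : Type*} {S : Set (V × W)} :
    ((⊤ : SimpleGraph V) □ (⊤ : SimpleGraph W)).IsIndepSet S ↔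
      S.InjOn Prod.fst ∧ S.InjOn Prod.snd := by
  simp only [isIndepSet_iff, Set.Pairwise, Set.InjOn, boxProd_adj, top_adj, Prod.ext_iff]
  grind

lemma isAssignmentVec_iff {m n k : ℕ} {x : EuclideanSpace ℝ (Fin m × Fin n)} :
    IsAssignmentVec m n k x ↔ IsIndepSetVec (⊤ □ ⊤) k x := by
  have heq_indicatorVec (M : Finset (Fin m × Fin n)) :
      (∀ p, x p = if p ∈ M then 1 else 0) ↔ indicatorVec M = x :=
    ⟨fun h => PiLp.ext fun p => (h p).symm, fun h p => h ▸ rfl⟩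
  simp only [IsAssignmentVec, IsIndepSetVec, isNIndepSet_iff, isIndepSet_top_boxProd_top_iff,
    heq_indicatorVec, Set.InjOn, mem_coe]
  grind

lemma assignmentPolytope_eq (m n k : ℕ) :
    assignmentPolytope m n k = indepSetPolytope (⊤ □ ⊤) k := by
  simp only [assignmentPolytope, indepSetPolytope, isAssignmentVec_iff]

end RookGraph

theorem stmt_16 {m n k : ℕ} (α β : EuclideanSpace ℝ (Fin m × Fin n))
    (hα : IsAssignmentVec m n k α) (hβ : IsAssignmentVec m n k β)
    (hnonedge : ¬ IsExposed ℝ (assignmentPolytope m n k) (segment ℝ α β)) :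
    ∃ α' β' : EuclideanSpace ℝ (Fin m × Fin n),
      IsAssignmentVec m n k α' ∧ IsAssignmentVec m n k β' ∧
      α' ≠ α ∧ α' ≠ β ∧ β' ≠ α ∧ β' ≠ β ∧ α + β = α' + β' := by
  simp only [isAssignmentVec_iff, assignmentPolytope_eq] at *
  exact stmt_16_general _ α β hα hβ hnonedge
end
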